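/- arXiv:2304.09036 — 2 statements merged into one kernel-verified Lean document; each statement's English description precedes it below -/
import Mathlib

section
/- Let f : ℝ^d → ℝ^d be of class C^{k+1} with all derivatives up to order k+1 bounded, k ≥ 1, and let φ_t^f be its flow. Define f^{[1]}(y) = (1/2) df(y)·f(y), f^{[j]}(y) = (1/(j+1)) df^{[j−1]}(y)·f(y) for 2 ≤ j ≤ k−1, and f̃_h^k = f + Σ_{j=1}^{k−1} h^j f^{[j]}. Fix T > 0 and a compact set K ⊂ ℝ^d. Then there exist C > 0 and h₀ > 0 such that for all 0 < h ≤ h₀ with Nh = T, N ∈ ℕ, and all y₀ ∈ K whose exact trajectory {φ_t^f(y₀) : t ∈ [0,T]} stays in K, the 'modified Euler' iterates y_0 = y₀, y_{n+1} = y_n + h f̃_h^k(y_n) satisfy max_{0 ≤ n ≤ N} |y_n − φ_{nh}^f(y₀)| ≤ C h^k; i.e., forward Euler applied to the truncated modified field is a method of order k. -/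
/-- The coefficient fields of the modified equation for the forward Euler
method: `f^[0] = f`, `f^[1] = (1/2) df·f`, `f^[j] = (1/(j+1)) df^[j−1]·f`. -/
noncomputable def eulerModCoeff {E : Type*} [NormedAddCommGroup E] [NormedSpace ℝ E]
    (f : E → E) : ℕ → E → E
  | 0 => f
  | j + 1 => fun y => ((j : ℝ) + 2)⁻¹ • fderiv ℝ (eulerModCoeff f j) y (f y)

section helpers

variable {E : Type*} [NormedAddCommGroup E] [NormedSpace ℝ E]

/-- `C^n` with bounded derivatives up to order `n`. -/
def BddCn (n : ℕ) (g : E → E) : Prop :=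
  ContDiff ℝ n g ∧ ∀ i : ℕ, i ≤ n → ∃ M : ℝ, ∀ y, ‖iteratedFDeriv ℝ i g y‖ ≤ M

lemma BddCn.step {n m : ℕ} (hnm : n ≤ m) {f g : E → E} (hf : BddCn m f) (hg : BddCn (n + 1) g)
    (c : ℝ) : BddCn n (fun y => c • fderiv ℝ g y (f y)) := by
  have h1 : ContDiff ℝ n (fderiv ℝ g) := hg.1.fderiv_right (by norm_cast)
  have h2 : ContDiff ℝ n f := hf.1.of_le (by exact_mod_cast hnm)
  have h3 : ContDiff ℝ n (fun y => fderiv ℝ g y (f y)) := h1.clm_apply h2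
  refine ⟨h3.const_smul c, fun i hi => ?_⟩
  choose! A hA using hg.2
  choose! B hB using hf.2
  refine ⟨‖c‖ * ∑ j ∈ Finset.range (i + 1), (i.choose j : ℝ) * A (j + 1) * B (i - j),
    fun y => ?_⟩
  have h4 : iteratedFDeriv ℝ i (fun y => c • fderiv ℝ g y (f y)) y
      = c • iteratedFDeriv ℝ i (fun y => fderiv ℝ g y (f y)) y := by
    apply iteratedFDeriv_const_smul_apply
    exact (h3.of_le (by exact_mod_cast hi)).contDiffAt
  rw [h4, norm_smul]
  refine mul_le_mul_of_nonneg_left ?_ (norm_nonneg _)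
  refine (norm_iteratedFDeriv_clm_apply h1 h2 y
    (by exact_mod_cast hi)).trans ?_
  refine Finset.sum_le_sum fun j hj => ?_
  have hj' : j ≤ i := by simpa [Nat.lt_succ_iff] using hj
  rw [norm_iteratedFDeriv_fderiv]
  have a1 := hA (j + 1) (by omega) y
  have a2 := hB (i - j) (by omega) y
  have := (norm_nonneg _).trans a1
  gcongr

lemma coeff_bdd {k : ℕ} {f : E → E} (hf : BddCn (k + 1) f) :
    ∀ j n : ℕ, n + j = k + 1 → BddCn n (eulerModCoeff f j) := by
  intro j
  induction j with
  | zero => intro n hn; obtain rfl : n = k + 1 := by omega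
            simpa [eulerModCoeff] using hf
  | succ j ih =>
    intro n hn
    have := BddCn.step (n := n) (by omega) hf (ih (n + 1) (by omega)) (((j : ℝ) + 2)⁻¹)
    simpa [eulerModCoeff] using this

lemma BddCn.lip {n : ℕ} {g : E → E} (hg : BddCn (n + 1) g) :
    ∃ L : ℝ, 0 ≤ L ∧ ∀ x y, ‖g x - g y‖ ≤ L * ‖x - y‖ := by
  obtain ⟨M, hM⟩ := hg.2 1 (by omega)
  have hd : ∀ y, ‖fderiv ℝ g y‖ ≤ M := fun y => by
    have := hM y
    rwa [← zero_add 1, ← norm_iteratedFDeriv_fderiv, norm_iteratedFDeriv_zero] at this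
  refine ⟨M, (norm_nonneg _).trans (hd 0), fun x y => ?_⟩
  refine Convex.norm_image_sub_le_of_norm_fderiv_le (𝕜 := ℝ) (s := Set.univ)
    (fun z _ => ?_) (fun z _ => hd z) convex_univ (Set.mem_univ _) (Set.mem_univ _)
  exact (hg.1.differentiable (by norm_cast)) z

lemma taylor_aux (M : ℝ) (t : ℝ) : ∀ (n : ℕ) (w : ℕ → ℝ → E),
    (∀ j < n, ∀ s, HasDerivAt (w j) (w (j + 1) s) s) → (∀ s, ‖w n s‖ ≤ M) →
    ∀ s ∈ Set.Icc 0 t,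
      ‖w 0 s - ∑ i ∈ Finset.range n, (s ^ i * ((i.factorial : ℝ))⁻¹) • w i 0‖ ≤ M * s ^ n := by
  intro n
  induction n with
  | zero => intro w _ hb s _; simpa using hb s
  | succ n ih =>
    intro w hw hb s hs
    have key := ih (fun j => w (j + 1)) (fun j hj r => hw (j + 1) (by omega) r) hb
    have hM : 0 ≤ M := (norm_nonneg _).trans (hb 0)
    have hder : ∀ r : ℝ, HasDerivAt
        (fun r => w 0 r - ∑ i ∈ Finset.range (n + 1), (r ^ i * ((i.factorial : ℝ))⁻¹) • w i 0)
        (w 1 r - ∑ i ∈ Finset.range n, (r ^ i * ((i.factorial : ℝ))⁻¹) • w (i + 1) 0) r := by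
      intro r
      refine (hw 0 (by omega) r).sub ?_
      simp_rw [Finset.sum_range_succ']
      simp only [pow_zero]
      refine HasDerivAt.add_const _ ?_
      refine HasDerivAt.fun_sum fun i _ => ?_
      have h1 := ((hasDerivAt_pow (i + 1) r).mul_const (((i + 1).factorial : ℝ))⁻¹).smul_const
        (w (i + 1) 0)
      convert h1 using 2
      have : ((i.factorial : ℝ)) ≠ 0 := by positivity
      have : (i : ℝ) + 1 ≠ 0 := by positivity
      rw [Nat.factorial_succ]
      push_cast
      field_simp
    have := norm_image_sub_le_of_norm_deriv_le_segment' (a := 0) (b := s) (C := M * s ^ n)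
      (fun r _ => (hder r).hasDerivWithinAt) (fun r hr => by
        refine (key r ⟨hr.1, hr.2.le.trans hs.2⟩).trans ?_
        have := hr.1
        have := hr.2.le
        gcongr) s ⟨hs.1, le_refl _⟩
    have h0 : w 0 0 - ∑ i ∈ Finset.range (n + 1),
        ((0 : ℝ) ^ i * ((i.factorial : ℝ))⁻¹) • w i 0 = 0 := by
      rw [Finset.sum_range_succ']; simp
    rw [h0] at this
    calc _ ≤ M * s ^ n * (s - 0) := by simpa using this
      _ = _ := by ring

/-- local error -/
lemma local_err {k : ℕ} {f : E → E} (hf : BddCn (k + 1) f) :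
    ∃ M : ℝ, 0 ≤ M ∧ ∀ u : ℝ → E, (∀ s, HasDerivAt u (f (u s)) s) → ∀ s, 0 ≤ s →
      ‖u s - (u 0 + s • ∑ j ∈ Finset.range k, s ^ j • eulerModCoeff f j (u 0))‖
        ≤ M * s ^ (k + 1) := by
  obtain ⟨M, hM⟩ := (coeff_bdd hf k 1 (by omega)).2 0 (by omega)
  simp only [norm_iteratedFDeriv_zero] at hM
  have hM0 : 0 ≤ M := (norm_nonneg _).trans (hM 0)
  refine ⟨(k + 1).factorial * M, by positivity, fun u hu s hs => ?_⟩
  let w : ℕ → ℝ → E := fun j => match j with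
    | 0 => u
    | j + 1 => fun r => ((j + 1).factorial : ℝ) • eulerModCoeff f j (u r)
  have hw : ∀ j < k + 1, ∀ r, HasDerivAt (w j) (w (j + 1) r) r := by
    intro j hj r
    match j with
    | 0 => simpa [w, eulerModCoeff] using hu r
    | j + 1 =>
      have hc := (coeff_bdd hf j (k + 1 - j) (by omega)).1
      have hd : HasFDerivAt (eulerModCoeff f j) (fderiv ℝ (eulerModCoeff f j) (u r)) (u r) :=
        ((hc.differentiable (by norm_cast; omega)) (u r)).hasFDerivAt
      have := (hd.comp_hasDerivAt r (hu r)).const_smul ((j + 1).factorial : ℝ)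
      convert this using 1
      · rfl
      change ((j + 1 + 1).factorial : ℝ) •
        (((j : ℝ) + 2)⁻¹ • fderiv ℝ (eulerModCoeff f j) (u r) (f (u r))) = _
      rw [smul_smul]
      congr 1
      rw [Nat.factorial_succ (j + 1)]
      have : (j : ℝ) + 2 ≠ 0 := by positivity
      push_cast
      field_simp
      ring
  have hb : ∀ r, ‖w (k + 1) r‖ ≤ (k + 1).factorial * M := by
    intro r
    simp only [w, norm_smul, Real.norm_natCast]
    gcongr
    exact hM _
  have := taylor_aux _ s (k + 1) w hw hb s ⟨hs, le_refl _⟩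
  convert this using 3
  rw [Finset.sum_range_succ', add_comm, Finset.smul_sum]
  congr 1
  · refine Finset.sum_congr rfl fun i _ => ?_
    simp only [w, smul_smul]
    congr 1
    have : (((i + 1).factorial : ℝ)) ≠ 0 := by positivity
    field_simp
    ring
  · simp [w]

lemma sum_lip {k : ℕ} {f : E → E} (hf : BddCn (k + 1) f) :
    ∃ L : ℝ, 0 ≤ L ∧ ∀ h : ℝ, 0 < h → h ≤ 1 → ∀ x y,
      ‖∑ j ∈ Finset.range k, h ^ j • eulerModCoeff f j x
        - ∑ j ∈ Finset.range k, h ^ j • eulerModCoeff f j y‖ ≤ L * ‖x - y‖ := by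
  have : ∀ j, j < k → ∃ L : ℝ, 0 ≤ L ∧ ∀ x y,
      ‖eulerModCoeff f j x - eulerModCoeff f j y‖ ≤ L * ‖x - y‖ := fun j hj =>
    (coeff_bdd hf j (k - j + 1) (by omega)).lip
  choose! L hL0 hL using this
  refine ⟨∑ j ∈ Finset.range k, L j,
    Finset.sum_nonneg fun j hj => hL0 j (Finset.mem_range.1 hj), fun h h0 h1 x y => ?_⟩
  rw [← Finset.sum_sub_distrib, Finset.sum_mul]
  refine norm_sum_le_of_le _ fun j hj => ?_
  rw [← smul_sub, norm_smul, Real.norm_of_nonneg (by positivity)]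
  calc h ^ j * _ ≤ 1 * _ := by
        gcongr
        exact pow_le_one₀ h0.le h1
    _ ≤ _ := by rw [one_mul]; exact hL j (Finset.mem_range.1 hj) x y

end helpers

theorem stmt15
    (d : ℕ) (k : ℕ) (hk : 1 ≤ k)
    (f : EuclideanSpace ℝ (Fin d) → EuclideanSpace ℝ (Fin d))
    (hf : ContDiff ℝ (k + 1 : ℕ) f)
    (hbd : ∀ i : ℕ, i ≤ k + 1 → ∃ M : ℝ, ∀ y, ‖iteratedFDeriv ℝ i f y‖ ≤ M)
    (φ : ℝ → EuclideanSpace ℝ (Fin d) → EuclideanSpace ℝ (Fin d))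
    (hφ0 : ∀ y, φ 0 y = y)
    (hφ : ∀ (t : ℝ) (y : EuclideanSpace ℝ (Fin d)),
      HasDerivAt (fun s => φ s y) (f (φ t y)) t)
    (T : ℝ) (hT : 0 < T)
    (K : Set (EuclideanSpace ℝ (Fin d))) (hK : IsCompact K) :
    ∃ C h₀ : ℝ, 0 < C ∧ 0 < h₀ ∧
      ∀ (h : ℝ) (N : ℕ), 0 < h → h ≤ h₀ → (N : ℝ) * h = T →
        ∀ y₀ ∈ K, (∀ t ∈ Set.Icc (0 : ℝ) T, φ t y₀ ∈ K) →
          ∀ yseq : ℕ → EuclideanSpace ℝ (Fin d), yseq 0 = y₀ →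
            (∀ n < N, yseq (n + 1) = yseq n + h • (f (yseq n) +
              ∑ j ∈ Finset.Icc 1 (k - 1), h ^ j • eulerModCoeff f j (yseq n))) →
            ∀ n ≤ N, ‖yseq n - φ (n * h) y₀‖ ≤ C * h ^ k := by
  have hB : BddCn (k + 1) f := ⟨hf, hbd⟩
  obtain ⟨M, hM0, hM⟩ := local_err hB
  obtain ⟨L, hL0, hL⟩ := sum_lip hB
  refine ⟨T * M * Real.exp (L * T) + 1, 1, by positivity, one_pos, ?_⟩
  intro h N h0 h1 hN y₀ _ _ yseq hy0 hstep
  have hsum : ∀ y, f y + ∑ j ∈ Finset.Icc 1 (k - 1), h ^ j • eulerModCoeff f j y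
      = ∑ j ∈ Finset.range k, h ^ j • eulerModCoeff f j y := by
    intro y
    obtain ⟨m, rfl⟩ : ∃ m, k = m + 1 := ⟨k - 1, by omega⟩
    rw [Finset.range_eq_Ico, Finset.sum_eq_sum_Ico_succ_bot (by omega)]
    simp only [pow_zero, one_smul, eulerModCoeff]
    congr 1
  have main : ∀ n ≤ N, ‖yseq n - φ (n * h) y₀‖
      ≤ n * (M * h ^ (k + 1)) * Real.exp (L * (n * h)) := by
    intro n
    induction n with
    | zero => intro _; simp [hy0, hφ0]
    | succ n ih =>
      intro hn
      have e1 := ih (by omega)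
      have e2 := hM (fun s => φ (n * h + s) y₀)
        (fun s => (hφ (n * h + s) y₀).comp_const_add (n * h) s) h h0.le
      simp only [add_zero] at e2
      have e3 := hL h h0 h1 (yseq n) (φ (n * h) y₀)
      have e4 : ((n + 1 : ℕ) : ℝ) * h = n * h + h := by push_cast; ring
      rw [e4, hstep n (by omega), hsum]
      set S := ∑ j ∈ Finset.range k, h ^ j • eulerModCoeff f j (yseq n)
      set S' := ∑ j ∈ Finset.range k, h ^ j • eulerModCoeff f j (φ (n * h) y₀)
      have e5 : yseq n + h • S - φ (n * h + h) y₀ = (yseq n - φ (n * h) y₀) + h • (S - S')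
          - (φ (n * h + h) y₀ - (φ (n * h) y₀ + h • S')) := by
        rw [smul_sub]; abel
      have e6 : ‖h • (S - S')‖ ≤ h * (L * ‖yseq n - φ (n * h) y₀‖) := by
        rw [norm_smul, Real.norm_of_nonneg h0.le]; gcongr
      have e7 : ‖yseq n + h • S - φ (n * h + h) y₀‖
          ≤ (1 + L * h) * ‖yseq n - φ (n * h) y₀‖ + M * h ^ (k + 1) := by
        rw [e5]
        have a := norm_sub_le ((yseq n - φ (n * h) y₀) + h • (S - S'))
          (φ (n * h + h) y₀ - (φ (n * h) y₀ + h • S'))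
        have b := norm_add_le (yseq n - φ (n * h) y₀) (h • (S - S'))
        linarith
      refine e7.trans ?_
      set A := M * h ^ (k + 1)
      have hA : 0 ≤ A := by positivity
      have hE : 1 + L * h ≤ Real.exp (L * h) := by
        have := Real.add_one_le_exp (L * h); linarith
      have hE1 : 1 ≤ Real.exp (L * (n * h + h)) := Real.one_le_exp (by positivity)
      calc (1 + L * h) * ‖yseq n - φ (n * h) y₀‖ + A
          ≤ Real.exp (L * h) * (n * A * Real.exp (L * (n * h)))
            + A * Real.exp (L * (n * h + h)) := by
            gcongr
            exact le_mul_of_one_le_right hA hE1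
        _ = _ := by
            rw [mul_add, Real.exp_add]; push_cast; ring
  intro n hn
  have hnT : (n : ℝ) * h ≤ T := by
    rw [← hN]; gcongr
  calc _ ≤ _ := main n hn
    _ = (n * h) * M * Real.exp (L * (n * h)) * h ^ k := by ring
    _ ≤ T * M * Real.exp (L * T) * h ^ k := by gcongr
    _ ≤ _ := by
      gcongr
      linarith
end

section
/- Let f : ℝ^d → ℝ^d be of class C⁴ with all derivatives up to order 4 bounded, with flow φ_t^f, and define f^{[1]}(y) = (1/24) d(df·f)(y)·f(y) + (1/8) df(y)·(df(y)·f(y)). Let Φ_h^g(y) = y + h g(y + (h/2) g(y)) be the explicit midpoint Runge-Kutta 2 method. Then for every compact K ⊂ ℝ^d there exist C > 0 and h₀ > 0 such that for all 0 < h ≤ h₀ and all y ∈ K, |φ_h^f(y) − Φ_h^{f + h² f^{[1]}}(y)| ≤ C h⁴; i.e., RK2 applied to the once-corrected modified field f + h² f^{[1]} has local error of order 4. -/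
/-- The first correction term of the modified field for the explicit midpoint
Runge-Kutta 2 method: `f^{[1]} = (1/24) d(df·f)·f + (1/8) (df)² f`. -/
noncomputable def rk2Corr1 {E : Type*} [NormedAddCommGroup E] [NormedSpace ℝ E]
    (f : E → E) (y : E) : E :=
  (24 : ℝ)⁻¹ • fderiv ℝ (fun z => fderiv ℝ f z (f z)) y (f y) +
    (8 : ℝ)⁻¹ • fderiv ℝ f y (fderiv ℝ f y (f y))

lemma tstep {E : Type*} [NormedAddCommGroup E] [NormedSpace ℝ E] {g g' : ℝ → E}
    (hd : ∀ t, HasDerivAt g (g' t) t) (h0 : g 0 = 0) {T C : ℝ} {n : ℕ} (hC : 0 ≤ C)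
    (hb : ∀ t, 0 ≤ t → t ≤ T → ‖g' t‖ ≤ C * t ^ n) :
    ∀ t, 0 ≤ t → t ≤ T → ‖g t‖ ≤ C * t ^ (n + 1) := by
  intro t ht htT
  have := norm_image_sub_le_of_norm_deriv_le_segment' (f := g) (f' := g') (a := 0) (b := t)
    (C := C * t ^ n) (fun x _ => (hd x).hasDerivWithinAt)
    (fun x hx => (hb x hx.1 (hx.2.le.trans htT)).trans
      (mul_le_mul_of_nonneg_left (pow_le_pow_left₀ hx.1 hx.2.le n) hC)) t ⟨ht, le_rfl⟩
  rw [h0, sub_zero, sub_zero] at this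
  rw [pow_succ, ← mul_assoc]
  exact this

lemma taylor3 {E : Type*} [NormedAddCommGroup E] [NormedSpace ℝ E] {u0 u1 u2 u3 : ℝ → E}
    (h0 : ∀ t, HasDerivAt u0 (u1 t) t) (h1 : ∀ t, HasDerivAt u1 (u2 t) t)
    (h2 : ∀ t, HasDerivAt u2 (u3 t) t) {T C : ℝ} (hC : 0 ≤ C)
    (hb : ∀ t, 0 ≤ t → t ≤ T → ‖u3 t‖ ≤ C) :
    ∀ t, 0 ≤ t → t ≤ T →
      ‖u0 t - u0 0 - t • u1 0 - (t ^ 2 / 2) • u2 0‖ ≤ C * t ^ 3 := by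
  have a2 := tstep (g := fun t => u2 t - u2 0) (n := 0) (T := T) (fun t => (h2 t).sub_const _)
    (by simp) hC (by simpa using hb)
  have a1 := tstep (g := fun t => u1 t - u1 0 - t • u2 0) (g' := fun t => u2 t - u2 0)
    (n := 1) (T := T) (fun t => by
      have := ((h1 t).sub_const (u1 0)).fun_sub ((hasDerivAt_id' t).smul_const (u2 0))
      simpa using this) (by simp) hC a2
  exact tstep (g := fun t => u0 t - u0 0 - t • u1 0 - (t ^ 2 / 2) • u2 0)
    (g' := fun t => u1 t - u1 0 - t • u2 0)
    (n := 2) (T := T) (fun t => by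
      have := (((h0 t).sub_const (u0 0)).fun_sub ((hasDerivAt_id' t).smul_const (u1 0))).fun_sub
        ((((hasDerivAt_id' t).fun_pow 2).div_const 2).smul_const (u2 0))
      simpa using this) (by simp) hC a1

lemma bdd_ball {E F : Type*} [NormedAddCommGroup E] [ProperSpace E]
    [NormedAddCommGroup F] {g : E → F} (hg : Continuous g) (R : ℝ) :
    ∃ C : ℝ, 0 ≤ C ∧ ∀ x, ‖x‖ ≤ R → ‖g x‖ ≤ C := by
  obtain ⟨C, hC⟩ := (isCompact_closedBall (0 : E) R).exists_bound_of_continuousOn hg.continuousOn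
  exact ⟨max C 0, le_max_right _ _, fun x hx =>
    (hC x (by simpa using hx)).trans (le_max_left _ _)⟩

lemma lip_ball {E F : Type*} [NormedAddCommGroup E] [NormedSpace ℝ E] [ProperSpace E]
    [NormedAddCommGroup F] [NormedSpace ℝ F] {g : E → F} (hg : ContDiff ℝ 1 g) (R : ℝ) :
    ∃ C : ℝ, 0 ≤ C ∧ ∀ x y, ‖x‖ ≤ R → ‖y‖ ≤ R → ‖g x - g y‖ ≤ C * ‖x - y‖ := by
  obtain ⟨C, hC0, hC⟩ := bdd_ball (hg.continuous_fderiv (by norm_num)) R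
  refine ⟨C, hC0, fun x y hx hy => ?_⟩
  exact (convex_closedBall (0 : E) R).norm_image_sub_le_of_norm_fderiv_le
    (fun z _ => (hg.differentiable (by norm_num)) z)
    (fun z hz => hC z (by simpa using hz)) (by simpa using hy) (by simpa using hx)

lemma main_aux {E : Type*} [NormedAddCommGroup E] [NormedSpace ℝ E] [ProperSpace E]
    (f : E → E) (hf : ContDiff ℝ 4 f) (M : ℝ) (hM0 : 0 ≤ M) (hM : ∀ y, ‖f y‖ ≤ M)
    (φ : ℝ → E → E) (hφ0 : ∀ y, φ 0 y = y)
    (hφ : ∀ (t : ℝ) (y : E), HasDerivAt (fun s => φ s y) (f (φ t y)) t) (R : ℝ) :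
    ∃ C : ℝ, 0 < C ∧ ∀ h : ℝ, 0 < h → h ≤ 1 → ∀ y, ‖y‖ ≤ R →
        ‖φ h y - (y + h • (f (y + (h / 2) • (f y + h ^ 2 • rk2Corr1 f y)) +
            h ^ 2 • rk2Corr1 f (y + (h / 2) • (f y + h ^ 2 • rk2Corr1 f y))))‖ ≤ C * h ^ 4 := by
  have c1 : ContDiff ℝ 3 (fderiv ℝ f) := hf.fderiv_right (by norm_num)
  have c2 : ContDiff ℝ 2 (fderiv ℝ (fderiv ℝ f)) := c1.fderiv_right (by norm_num)
  have c3 : ContDiff ℝ 1 (fderiv ℝ (fderiv ℝ (fderiv ℝ f))) := c2.fderiv_right (by norm_num)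
  have hf3 : ContDiff ℝ 3 f := hf.of_le (by norm_num)
  have hf2 : ContDiff ℝ 2 f := hf.of_le (by norm_num)
  have hf1 : ContDiff ℝ 1 f := hf.of_le (by norm_num)
  set F2 : E → E := fun z => fderiv ℝ f z (f z) with hF2
  have cF2 : ContDiff ℝ 3 F2 := c1.clm_apply hf3
  set F3 : E → E := fun z => fderiv ℝ F2 z (f z) with hF3
  have cF3 : ContDiff ℝ 2 F3 := (cF2.fderiv_right (m := 2) (by norm_num)).clm_apply hf2
  set F4 : E → E := fun z => fderiv ℝ F3 z (f z) with hF4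
  have cF4 : ContDiff ℝ 1 F4 := (cF3.fderiv_right (m := 1) (by norm_num)).clm_apply hf1
  have hg : rk2Corr1 f = fun z => (24 : ℝ)⁻¹ • F3 z + (8 : ℝ)⁻¹ • fderiv ℝ f z (F2 z) := rfl
  have cg : ContDiff ℝ 1 (rk2Corr1 f) := by
    rw [hg]
    exact ((cF3.of_le (by norm_num)).const_smul _).add
      (((c1.of_le (by norm_num)).clm_apply (cF2.of_le (by norm_num))).const_smul _)
  have hF3e : ∀ z, F3 z = fderiv ℝ (fderiv ℝ f) z (f z) (f z) + fderiv ℝ f z (F2 z) := by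
    intro z
    have := ((c1.differentiable (by norm_num)) z).hasFDerivAt.clm_apply
      ((hf.differentiable (by norm_num)) z).hasFDerivAt
    simp only [hF3, hF2]
    rw [this.fderiv]
    simp [add_comm]
  obtain ⟨N, hN0, hN⟩ := bdd_ball cg.continuous R
  set B := R + M + N with hB
  obtain ⟨C4, hC40, hC4⟩ := bdd_ball cF4.continuous B
  obtain ⟨D3, hD30, hD3⟩ := bdd_ball c3.continuous B
  obtain ⟨L, hL0, hL⟩ := lip_ball hf1 B
  obtain ⟨L1, hL10, hL1⟩ := lip_ball cg B
  refine ⟨C4 + D3 * M * M * M + L * N + L1 * (M + N) + 1, by positivity, ?_⟩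
  intro h h0 h1 y hy
  -- flow
  have hψ : ∀ t, 0 ≤ t → t ≤ 1 → ‖φ t y‖ ≤ B := by
    intro t ht ht1
    have := tstep (g := fun t => φ t y - y) (n := 0) (T := 1) (fun t => (hφ t y).sub_const _)
      (by simp [hφ0]) hM0 (by intro t _ _; simpa using hM _) t ht ht1
    have h3 : ‖φ t y‖ ≤ ‖φ t y - y‖ + ‖y‖ := by
      simpa using norm_add_le (φ t y - y) y
    have h4 : M * t ≤ M := mul_le_of_le_one_right hM0 ht1
    simp at this
    linarith
  have comp : ∀ {G : E → E}, Differentiable ℝ G → ∀ t,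
      HasDerivAt (fun s => G (φ s y)) (fderiv ℝ G (φ t y) (f (φ t y))) t :=
    fun hG t => (hG (φ t y)).hasFDerivAt.comp_hasDerivAt t (hφ t y)
  have tA := taylor3 (comp (hf.differentiable (by norm_num)))
    (comp (G := F2) (cF2.differentiable (by norm_num)))
    (comp (G := F3) (cF3.differentiable (by norm_num))) (T := 1) hC40
    (fun t ht ht1 => hC4 _ (hψ t ht ht1))
  simp only [hφ0] at tA
  have tA' := tstep (g := fun t => φ t y - y - t • f y - (t ^ 2 / 2) • F2 y - (t ^ 3 / 6) • F3 y)
    (g' := fun t => f (φ t y) - f y - t • F2 y - (t ^ 2 / 2) • F3 y)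
    (n := 3) (T := 1) (fun t => by
      have := ((((hφ t y).sub_const y).fun_sub ((hasDerivAt_id' t).smul_const (f y))).fun_sub
        ((((hasDerivAt_id' t).fun_pow 2).div_const 2).smul_const (F2 y))).fun_sub
        ((((hasDerivAt_id' t).fun_pow 3).div_const 6).smul_const (F3 y))
      refine this.congr_deriv ?_
      norm_num
      congr 1
      ring) (by simp [hφ0]) hC40 tA h h0.le h1
  -- line
  have hseg : ∀ t : ℝ, 0 ≤ t → t ≤ 1 → ‖y + t • f y‖ ≤ B := by
    intro t ht ht1
    have h3 := norm_add_le y (t • f y)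
    rw [norm_smul, Real.norm_of_nonneg ht] at h3
    have h4 : t * ‖f y‖ ≤ M := (mul_le_of_le_one_left (norm_nonneg _) ht1).trans (hM y)
    linarith
  have line : ∀ t, HasDerivAt (fun s : ℝ => y + s • f y) (f y) t := fun t => by
    simpa using ((hasDerivAt_id t).smul_const (f y)).const_add y
  have l0 : ∀ t, HasDerivAt (fun s : ℝ => f (y + s • f y)) (fderiv ℝ f (y + t • f y) (f y)) t :=
    fun t => ((hf.differentiable (by norm_num)) _).hasFDerivAt.comp_hasDerivAt t (line t)
  have l1 : ∀ t, HasDerivAt (fun s : ℝ => fderiv ℝ f (y + s • f y) (f y))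
      (fderiv ℝ (fderiv ℝ f) (y + t • f y) (f y) (f y)) t := fun t => by
    have := (((c1.differentiable (by norm_num)) _).hasFDerivAt.comp_hasDerivAt t (line t)).clm_apply
      (hasDerivAt_const t (f y))
    simpa using this
  have l2 : ∀ t, HasDerivAt (fun s : ℝ => fderiv ℝ (fderiv ℝ f) (y + s • f y) (f y) (f y))
      (fderiv ℝ (fderiv ℝ (fderiv ℝ f)) (y + t • f y) (f y) (f y) (f y)) t := fun t => by
    have := ((((c2.differentiable (by norm_num)) _).hasFDerivAt.comp_hasDerivAt t
      (line t)).clm_apply (hasDerivAt_const t (f y))).clm_apply (hasDerivAt_const t (f y))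
    simpa using this
  have tB := taylor3 l0 l1 l2 (T := 1) (C := D3 * M * M * M) (by positivity) (fun t ht ht1 => by
    have e1 := ContinuousLinearMap.le_opNorm
      (fderiv ℝ (fderiv ℝ (fderiv ℝ f)) (y + t • f y) (f y) (f y)) (f y)
    have e2 := ContinuousLinearMap.le_opNorm
      (fderiv ℝ (fderiv ℝ (fderiv ℝ f)) (y + t • f y) (f y)) (f y)
    have e3 := ContinuousLinearMap.le_opNorm
      (fderiv ℝ (fderiv ℝ (fderiv ℝ f)) (y + t • f y)) (f y)
    have e4 := hD3 _ (hseg t ht ht1)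
    have e5 := hM y
    calc _ ≤ _ := e1
      _ ≤ (‖fderiv ℝ (fderiv ℝ (fderiv ℝ f)) (y + t • f y)‖ * ‖f y‖ * ‖f y‖) * ‖f y‖ := by
        gcongr
        exact e2.trans (by gcongr)
      _ ≤ _ := by gcongr) (h / 2) (by linarith) (by linarith)
  simp only [zero_smul, add_zero] at tB
  set v := f y with hv
  set g := rk2Corr1 f with hgdef
  set z := y + (h / 2) • (v + h ^ 2 • g y) with hz
  have hgy : ‖g y‖ ≤ N := hN y hy
  have h21 : h ^ 2 ≤ 1 := pow_le_one₀ h0.le h1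
  have hyB : ‖y‖ ≤ B := by linarith
  have hzy : ‖z - y‖ ≤ h * (M + N) := by
    rw [hz, add_sub_cancel_left, norm_smul, Real.norm_of_nonneg (by linarith)]
    have a := norm_add_le v (h ^ 2 • g y)
    rw [norm_smul, Real.norm_of_nonneg (by positivity)] at a
    have b : h ^ 2 * ‖g y‖ ≤ N := (mul_le_of_le_one_left (norm_nonneg _) h21).trans hgy
    have c : ‖v + h ^ 2 • g y‖ ≤ M + N := by linarith [hM y]
    have : h / 2 ≤ h := by linarith
    gcongr
  have hzB : ‖z‖ ≤ B := by
    have h3 : ‖z‖ ≤ ‖z - y‖ + ‖y‖ := by simpa using norm_add_le (z - y) y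
    have : h * (M + N) ≤ M + N := mul_le_of_le_one_left (by positivity) h1
    linarith
  have b3 : ‖f z - f (y + (h / 2) • v)‖ ≤ L * N * h ^ 3 := by
    have a := hL z (y + (h / 2) • v) hzB (hseg _ (by linarith) (by linarith))
    have e : z - (y + (h / 2) • v) = (h ^ 3 / 2) • g y := by
      rw [hz]; module
    rw [e, norm_smul, Real.norm_of_nonneg (by positivity)] at a
    have : h ^ 3 / 2 * ‖g y‖ ≤ h ^ 3 * N := by
      have : h ^ 3 / 2 ≤ h ^ 3 := by linarith [pow_pos h0 3]
      gcongr
    calc _ ≤ _ := a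
      _ ≤ L * (h ^ 3 * N) := by gcongr
      _ = _ := by ring
  have b4 : ‖g z - g y‖ ≤ L1 * (M + N) * h := by
    calc _ ≤ _ := hL1 z y hzB hyB
      _ ≤ L1 * (h * (M + N)) := by gcongr
      _ = _ := by ring
  have b2 : D3 * M * M * M * (h / 2) ^ 3 ≤ D3 * M * M * M * h ^ 3 := by
    have : h / 2 ≤ h := by linarith
    gcongr
  have key : φ h y - (y + h • (f z + h ^ 2 • g z)) =
      (φ h y - y - h • v - (h ^ 2 / 2) • F2 y - (h ^ 3 / 6) • F3 y)
      - h • (f (y + (h / 2) • v) - v - (h / 2) • fderiv ℝ f y v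
          - ((h / 2) ^ 2 / 2) • fderiv ℝ (fderiv ℝ f) y v v)
      - h • (f z - f (y + (h / 2) • v)) - h ^ 3 • (g z - g y) := by
    have e1 : g y = (24 : ℝ)⁻¹ • F3 y + (8 : ℝ)⁻¹ • fderiv ℝ f y (F2 y) := rfl
    have e2 : fderiv ℝ f y v = F2 y := rfl
    have e3 : fderiv ℝ (fderiv ℝ f) y v v = F3 y - fderiv ℝ f y (F2 y) := by
      rw [hF3e y]; simp [hv]
    rw [e3, e2, e1]
    module
  rw [key]
  refine (norm_sub_le _ _).trans ?_
  have n1 := norm_sub_le (φ h y - y - h • v - (h ^ 2 / 2) • F2 y - (h ^ 3 / 6) • F3 y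
      - h • (f (y + (h / 2) • v) - v - (h / 2) • fderiv ℝ f y v
          - ((h / 2) ^ 2 / 2) • fderiv ℝ (fderiv ℝ f) y v v)) (h • (f z - f (y + (h / 2) • v)))
  have n2 := norm_sub_le (φ h y - y - h • v - (h ^ 2 / 2) • F2 y - (h ^ 3 / 6) • F3 y)
      (h • (f (y + (h / 2) • v) - v - (h / 2) • fderiv ℝ f y v
          - ((h / 2) ^ 2 / 2) • fderiv ℝ (fderiv ℝ f) y v v))
  rw [norm_smul, Real.norm_of_nonneg h0.le] at n1 n2
  rw [norm_smul, Real.norm_of_nonneg (by positivity : (0:ℝ) ≤ h ^ 3)]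
  have m2 := mul_le_mul_of_nonneg_left (tB.trans b2) h0.le
  have m3 := mul_le_mul_of_nonneg_left b3 h0.le
  have m4 := mul_le_mul_of_nonneg_left b4 (by positivity : (0:ℝ) ≤ h ^ 3)
  have p4 : 0 < h ^ 4 := by positivity
  nlinarith

/-- RK2 applied to the once-corrected modified field `f + h² f^{[1]}` has local
error of order 4. -/
theorem stmt16
    (d : ℕ)
    (f : EuclideanSpace ℝ (Fin d) → EuclideanSpace ℝ (Fin d))
    (hf : ContDiff ℝ (4 : ℕ) f)
    (hbd : ∀ i : ℕ, i ≤ 4 → ∃ M : ℝ, ∀ y, ‖iteratedFDeriv ℝ i f y‖ ≤ M)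
    (φ : ℝ → EuclideanSpace ℝ (Fin d) → EuclideanSpace ℝ (Fin d))
    (hφ0 : ∀ y, φ 0 y = y)
    (hφ : ∀ (t : ℝ) (y : EuclideanSpace ℝ (Fin d)),
      HasDerivAt (fun s => φ s y) (f (φ t y)) t) :
    ∀ K : Set (EuclideanSpace ℝ (Fin d)), IsCompact K →
      ∃ C h₀ : ℝ, 0 < C ∧ 0 < h₀ ∧ ∀ h : ℝ, 0 < h → h ≤ h₀ → ∀ y ∈ K,
        ‖φ h y -
          (y + h • (fun z => f z + h ^ 2 • rk2Corr1 f z)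
            (y + (h / 2) • (fun z => f z + h ^ 2 • rk2Corr1 f z) y))‖ ≤
          C * h ^ 4 := by
  intro K hK
  obtain ⟨R, hR⟩ := hK.isBounded.exists_norm_le
  obtain ⟨M, hM⟩ := hbd 0 (by norm_num)
  have hM' : ∀ y, ‖f y‖ ≤ M := fun y => by simpa using hM y
  obtain ⟨C, hC, H⟩ := main_aux f (by exact_mod_cast hf) M ((norm_nonneg _).trans (hM' 0)) hM'
    φ hφ0 hφ R
  exact ⟨C, 1, hC, one_pos, fun h h0 h1 y hy => H h h0 h1 y (hR y hy)⟩
end
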